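/- arXiv:2408.03037 — 2 statements merged into one kernel-verified Lean document; each statement's English description precedes it below -/
import Mathlib

section
/- Channel feedback does not help when both decision makers are causal (Theorem 2): The region R_{ed,f} of achievable cost pairs for control designs with causal encoder having strictly causal channel feedback and causal decoder is equal to the region R_ed of achievable cost pairs for control designs with causal encoder (no feedback) and causal decoder: R_{ed,f} = R_ed. -/
/-!
Formalization of results from "Causal Vector-valued Witsenhausen Counterexamples with
Feedback" (Zhao, Le Treust, Oechtering).

Stochastic encoders/decoders (stochastic kernels) are realized as measurable functions of
independent i.i.d. randomization seeds, which is equivalent to the kernel formulation on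
standard Borel spaces.
-/

open MeasureTheory ProbabilityTheory
open scoped ENNReal NNReal

namespace Witsenhausen

noncomputable section

/-- A path (block of length `n`) of real values. -/
abbrev Path (n : ℕ) : Type := Fin n → ℝ

/-- i.i.d. centered Gaussian vector of length `n` and variance `v`. -/
def iidGaussian (n : ℕ) (v : ℝ≥0) : Measure (Path n) :=
  Measure.pi fun _ => gaussianReal 0 v

instance (n : ℕ) (v : ℝ≥0) : IsProbabilityMeasure (iidGaussian n v) := by
  unfold iidGaussian; infer_instance

/-- Canonical sample space: source `X₀ⁿ`, channel noise `Z₁ⁿ`, and the randomization seeds of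
the (stochastic) encoder and decoder. -/
abbrev Sample (n : ℕ) : Type := Path n × Path n × Path n × Path n

/-- The base randomness: the i.i.d. `N(0,Q)` source `X₀ⁿ`, the independent i.i.d. `N(0,N)`
channel noise `Z₁ⁿ`, and independent i.i.d. randomization seeds for the stochastic encoder
and decoder. -/
def base (n : ℕ) (Q N : ℝ≥0) : Measure (Sample n) :=
  (iidGaussian n Q).prod ((iidGaussian n N).prod
    ((iidGaussian n 1).prod (iidGaussian n 1)))

instance (n : ℕ) (Q N : ℝ≥0) : IsProbabilityMeasure (base n Q N) := by
  unfold base; infer_instance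

/-- The source sequence `X₀ⁿ`. -/
def srcX0 {n : ℕ} (ω : Sample n) : Path n := ω.1
/-- The channel noise sequence `Z₁ⁿ`. -/
def noiseZ {n : ℕ} (ω : Sample n) : Path n := ω.2.1
/-- The encoder randomization seeds. -/
def seedV {n : ℕ} (ω : Sample n) : Path n := ω.2.2.1
/-- The decoder randomization seeds. -/
def seedW {n : ℕ} (ω : Sample n) : Path n := ω.2.2.2

/-- The long-run input cost `c_P(u₁ⁿ) = (1/n) ∑_t u_{1,t}²`. -/
def costP {n : ℕ} (u : Path n) : ℝ := (1 / (n : ℝ)) * ∑ t, (u t) ^ 2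

/-- The long-run estimation cost `c_S(x₁ⁿ, u₂ⁿ) = (1/n) ∑_t (x_{1,t} - u_{2,t})²`. -/
def costS {n : ℕ} (x u : Path n) : ℝ := (1 / (n : ℝ)) * ∑ t, (x t - u t) ^ 2

/-- A control design with causal encoder and causal decoder: at each time `t` the stochastic
encoder `f^t` observes `X₀^t` and the stochastic decoder `g^t` observes `Y₁^t` (stochastic
maps are realized as measurable functions of independent randomization seeds). -/
structure Design (n : ℕ) where
  enc : Fin n → Path n → ℝ → ℝ
  dec : Fin n → Path n → ℝ → ℝ
  enc_meas : ∀ t, Measurable fun p : Path n × ℝ => enc t p.1 p.2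
  dec_meas : ∀ t, Measurable fun p : Path n × ℝ => dec t p.1 p.2
  /-- causal encoding: `U_{1,t}` depends on the source only through `X₀^t`. -/
  enc_causal : ∀ (t : Fin n) (x x' : Path n) (v : ℝ),
    (∀ s, s ≤ t → x s = x' s) → enc t x v = enc t x' v
  /-- causal decoding: `U_{2,t}` depends on the channel output only through `Y₁^t`. -/
  dec_causal : ∀ (t : Fin n) (y y' : Path n) (w : ℝ),
    (∀ s, s ≤ t → y s = y' s) → dec t y w = dec t y' w

namespace Design

variable {n : ℕ} (c : Design n)

/-- The control sequence `U₁ⁿ`. -/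
def U1 (ω : Sample n) : Path n := fun t => c.enc t (srcX0 ω) (seedV ω t)
/-- The interim state `X₁ⁿ = X₀ⁿ + U₁ⁿ`. -/
def X1 (ω : Sample n) : Path n := fun t => srcX0 ω t + c.U1 ω t
/-- The channel output `Y₁ⁿ = X₁ⁿ + Z₁ⁿ`. -/
def Y1 (ω : Sample n) : Path n := fun t => c.X1 ω t + noiseZ ω t
/-- The estimate sequence `U₂ⁿ`. -/
def U2 (ω : Sample n) : Path n := fun t => c.dec t (c.Y1 ω) (seedW ω t)

end Design

/-- `(P, S)` is an achievable pair of costs for causal encoding and causal decoding: for every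
`ε > 0` there is `n₀` such that for every blocklength `n ≥ n₀` some control design makes the
expected cost deviation `E[|P - c_P(U₁ⁿ)| + |S - c_S(X₁ⁿ, U₂ⁿ)|]` at most `ε`.
This defines the region `R_ed`. -/
def achievable (Q N : ℝ≥0) (P S : ℝ) : Prop :=
  ∀ ε > (0 : ℝ), ∃ n₀ : ℕ, ∀ n ≥ n₀, ∃ c : Design n,
    (∫⁻ ω, ENNReal.ofReal
        (|P - costP (c.U1 ω)| + |S - costS (c.X1 ω) (c.U2 ω)|) ∂(base n Q N))
      ≤ ENNReal.ofReal ε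

/-- The control sequence generated recursively by a feedback encoder: at each time `t < n`,
`U_{1,t}` is produced from the source `x`, the past channel outputs
`Y_{1,s} = X_{0,s} + U_{1,s} + Z_{1,s}` for `s < t` (the strict prefix, padded by `0`), and
the seed `v t`. -/
def fbCtrl {n : ℕ} (enc : Fin n → Path n → Path n → ℝ → ℝ)
    (x z v : Path n) (t : ℕ) : ℝ :=
  if ht : t < n then
    enc ⟨t, ht⟩ x
      (fun s : Fin n => if hs : (s : ℕ) < t then x s + fbCtrl enc x z v s + z s else 0)
      (v ⟨t, ht⟩)
  else 0
termination_by t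
decreasing_by exact hs

/-- A control design with causal encoder with (strictly causal) channel feedback and causal
decoder: at time `t` the stochastic encoder `f^{f,t}` observes `(X₀^t, Y₁^{t-1})` and the
stochastic decoder `g^t` observes `Y₁^t`. -/
structure FBDesign (n : ℕ) where
  enc : Fin n → Path n → Path n → ℝ → ℝ
  dec : Fin n → Path n → ℝ → ℝ
  enc_meas : ∀ t, Measurable fun p : (Path n × Path n) × ℝ => enc t p.1.1 p.1.2 p.2
  dec_meas : ∀ t, Measurable fun p : Path n × ℝ => dec t p.1 p.2
  /-- the encoder observes the source causally and the channel output strictly causally -/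
  enc_causal : ∀ (t : Fin n) (x x' y y' : Path n) (v : ℝ),
    (∀ s, s ≤ t → x s = x' s) → (∀ s, s < t → y s = y' s) →
      enc t x y v = enc t x' y' v
  /-- causal decoding -/
  dec_causal : ∀ (t : Fin n) (y y' : Path n) (w : ℝ),
    (∀ s, s ≤ t → y s = y' s) → dec t y w = dec t y' w

namespace FBDesign

variable {n : ℕ} (c : FBDesign n)

/-- The control sequence `U₁ⁿ` (defined recursively through the feedback loop). -/
def U1 (ω : Sample n) : Path n := fun t => fbCtrl c.enc (srcX0 ω) (noiseZ ω) (seedV ω) t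
/-- The interim state `X₁ⁿ = X₀ⁿ + U₁ⁿ`. -/
def X1 (ω : Sample n) : Path n := fun t => srcX0 ω t + c.U1 ω t
/-- The channel output `Y₁ⁿ = X₁ⁿ + Z₁ⁿ`. -/
def Y1 (ω : Sample n) : Path n := fun t => c.X1 ω t + noiseZ ω t
/-- The estimate sequence `U₂ⁿ`. -/
def U2 (ω : Sample n) : Path n := fun t => c.dec t (c.Y1 ω) (seedW ω t)

end FBDesign

/-- The region `R_{ed,f}`: achievable pairs of costs for causal encoding with channel feedback
and causal decoding. -/
def achievableFB (Q N : ℝ≥0) (P S : ℝ) : Prop :=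
  ∀ ε > (0 : ℝ), ∃ n₀ : ℕ, ∀ n ≥ n₀, ∃ c : FBDesign n,
    (∫⁻ ω, ENNReal.ofReal
        (|P - costP (c.U1 ω)| + |S - costS (c.X1 ω) (c.U2 ω)|) ∂(base n Q N))
      ≤ ENNReal.ofReal ε

/-!
Fix a feedback design of blocklength `n` and draw a time `t` uniformly. Once `t` and all
randomness other than the source and noise at time `t` are frozen, the design acts at time `t` as
a one-shot strategy: an encoder seeing only the current source symbol and a decoder seeing only
the current output. The frozen past is independent of the current symbols even when it contains
past outputs, so feedback is no more than common randomness shared by the encoder and the decoder.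

Long blocks need no common randomness. Playing an i.i.d. sequence of random one-shot strategies
brings the long-run costs `L¹`-close to their mean by the law of large numbers, so some
realization of the sequence does too, and a realization is a feedback-free design. Hence the mean
costs of every feedback design lie in `R_ed`, and `R_ed` is closed.
-/

section LawOfLargeNumbers

theorem measurePreserving_pi_of_injective {κ ι : Type*} [Fintype κ] {X : ι → Type*}
    [∀ i, MeasurableSpace (X i)] (μ : ∀ i, Measure (X i)) [∀ i, IsProbabilityMeasure (μ i)]
    {e : κ → ι} (he : Function.Injective e) :
    MeasurePreserving (fun (x : ∀ i, X i) k => x (e k)) (Measure.infinitePi μ)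
      (Measure.pi fun k => μ (e k)) := by
  have hindep : iIndepFun (fun i (x : ∀ i, X i) => x i) (Measure.infinitePi μ) :=
    iIndepFun_infinitePi (X := fun _ => id) fun _ => measurable_id
  have hlaw := (hindep.precomp he).hasLaw_pi
    fun k => (measurePreserving_eval_infinitePi μ (e k)).hasLaw
  exact ⟨by fun_prop, hlaw.map_eq⟩

theorem tendsto_eLpNorm_average_sub_integral {α E : Type*} [MeasurableSpace α]
    [NormedAddCommGroup E] [NormedSpace ℝ E] [CompleteSpace E] [MeasurableSpace E] [BorelSpace E]
    {μ : Measure α} [IsProbabilityMeasure μ] {p : ℝ≥0∞} (hp : 1 ≤ p) (hp' : p ≠ ∞) {h : α → E}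
    (hm : Measurable h) (hi : MemLp h p μ) :
    Filter.Tendsto
      (fun n : ℕ => eLpNorm (fun ω : Fin n → α => (n : ℝ)⁻¹ • ∑ t, h (ω t) - ∫ a, h a ∂μ) p
        (Measure.pi fun _ => μ))
      Filter.atTop (nhds 0) := by
  let M : Measure (ℕ → α) := Measure.infinitePi fun _ => μ
  have heval (i : ℕ) : MeasurePreserving (fun ω : ℕ → α => ω i) M μ :=
    measurePreserving_eval_infinitePi (fun _ => μ) i
  have hindep : iIndepFun (fun i (ω : ℕ → α) => h (ω i)) M :=
    iIndepFun_infinitePi (X := fun _ => h) fun _ => hm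
  have hident (i : ℕ) :
      IdentDistrib (fun ω : ℕ → α => h (ω i)) (fun ω : ℕ → α => h (ω 0)) M M :=
    ((heval i).hasLaw.identDistrib (heval 0).hasLaw).comp hm
  have hmean : ∫ ω, h (ω 0) ∂M = ∫ a, h a ∂μ :=
    (heval 0).hasLaw.integral_comp hi.aestronglyMeasurable
  refine (strong_law_Lp hp hp' (fun i (ω : ℕ → α) => h (ω i)) (hi.comp_measurePreserving (heval 0))
    (fun i j hij => hindep.indepFun hij) hident).congr fun n => ?_
  have hprefix : MeasurePreserving (fun (ω : ℕ → α) (t : Fin n) => ω t) M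
      (Measure.pi fun _ : Fin n => μ) :=
    measurePreserving_pi_of_injective (fun _ => μ) Fin.val_injective
  have hsum : AEStronglyMeasurable
      (fun ω : Fin n → α => (n : ℝ)⁻¹ • ∑ t, h (ω t) - ∫ a, h a ∂μ) (Measure.pi fun _ => μ) :=
    ((Finset.aestronglyMeasurable_fun_sum _ fun t _ =>
      hi.aestronglyMeasurable.comp_measurePreserving
        (measurePreserving_eval (fun _ => μ) t)).const_smul _).sub aestronglyMeasurable_const
  rw [← eLpNorm_comp_measurePreserving hsum hprefix]
  simp only [hmean, Finset.sum_range, Function.comp_def]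

end LawOfLargeNumbers

section ProductSpaces

theorem measurable_uncurry_of_countable_fst {ι Ω β γ : Type*} [Countable ι] [MeasurableSpace ι]
    [MeasurableSingletonClass ι] [MeasurableSpace Ω] [MeasurableSpace β] [MeasurableSpace γ]
    {f : ι × Ω → β → γ} (hf : ∀ i, Measurable fun q : Ω × β => f (i, q.1) q.2) :
    Measurable (Function.uncurry f) :=
  (measurable_from_prod_countable_right (f := fun q : ι × Ω × β => f (q.1, q.2.1) q.2.2) hf).comp
    MeasurableEquiv.prodAssoc.measurable

theorem measurePreserving_update {ι : Type*} [Fintype ι] [DecidableEq ι] {X : ι → Type*}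
    [∀ i, MeasurableSpace (X i)] (μ : ∀ i, Measure (X i)) [∀ i, SigmaFinite (μ i)]
    (i : ι) [IsProbabilityMeasure (μ i)] :
    MeasurePreserving (fun p : (∀ i, X i) × X i => Function.update p.1 i p.2)
      ((Measure.pi μ).prod (μ i)) (Measure.pi μ) := by
  refine ⟨measurable_update', Measure.ext_of_lintegral _ fun f hf => ?_⟩
  have hf' : Measurable fun p : (∀ i, X i) × X i => f (Function.update p.1 i p.2) :=
    hf.comp measurable_update'
  rw [lintegral_map hf measurable_update', lintegral_prod _ hf'.aemeasurable]
  -- Integrating out coordinate `i` twice is the same as integrating it out once.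
  refine lintegral_eq_of_lmarginal_eq {i} hf'.lintegral_prod_right' hf ?_
  ext x
  simp [lmarginal_singleton]

variable {α β γ δ : Type*} [MeasurableSpace α] [MeasurableSpace β] [MeasurableSpace γ]
  [MeasurableSpace δ] (μ : Measure α) (ν : Measure β) (ρ : Measure γ) (τ : Measure δ)
  [SFinite μ] [SFinite ν] [SFinite ρ] [SFinite τ]

theorem measurePreserving_prod_right_comm :
    MeasurePreserving (fun p : (α × β) × γ => ((p.1.1, p.2), p.1.2))
      ((μ.prod ν).prod ρ) ((μ.prod ρ).prod ν) :=
  ((measurePreserving_prodAssoc μ ρ ν).symm _).comp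
    (((MeasurePreserving.id μ).prod Measure.measurePreserving_swap).comp
      (measurePreserving_prodAssoc μ ν ρ))

theorem measurePreserving_prod_prod_prod_comm :
    MeasurePreserving (fun p : (α × β) × γ × δ => ((p.1.1, p.2.1), (p.1.2, p.2.2)))
      ((μ.prod ν).prod (ρ.prod τ)) ((μ.prod ρ).prod (ν.prod τ)) :=
  (measurePreserving_prodAssoc (μ.prod ρ) ν τ).comp
    (((measurePreserving_prod_right_comm μ ν ρ).prod (MeasurePreserving.id τ)).comp
      ((measurePreserving_prodAssoc (μ.prod ν) ρ τ).symm _))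

end ProductSpaces

section Averages

variable {ι Ω E : Type*} [MeasurableSpace Ω] {μ : Measure Ω} [NormedAddCommGroup E]

theorem integrable_of_integrable_sum_of_nonneg [Fintype ι] {h : ι → Ω → ℝ}
    (hmeas : ∀ t, AEStronglyMeasurable (h t) μ) (hnonneg : ∀ t ω, 0 ≤ h t ω)
    (hint : Integrable (fun ω => ∑ t, h t ω) μ) (t : ι) : Integrable (h t) μ := by
  refine hint.mono' (hmeas t) (.of_forall fun ω => ?_)
  rw [Real.norm_of_nonneg (hnonneg t ω)]
  exact Finset.single_le_sum (fun s _ => hnonneg s ω) (Finset.mem_univ t)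

theorem enorm_sub_integral_le_lintegral [NormedSpace ℝ E] [CompleteSpace E]
    [IsProbabilityMeasure μ] {f : Ω → E} (hf : Integrable f μ) (r : E) :
    ‖r - ∫ ω, f ω ∂μ‖ₑ ≤ ∫⁻ ω, ‖r - f ω‖ₑ ∂μ := by
  have hsub : r - ∫ ω, f ω ∂μ = ∫ ω, (r - f ω) ∂μ := by
    simp [integral_sub (integrable_const r) hf]
  rw [hsub]
  exact enorm_integral_le_lintegral_enorm _

variable [MeasurableSpace ι] [MeasurableSingletonClass ι] [SFinite μ]

theorem integrable_prod_of_finite [Finite ι] {τ : Measure ι} [IsFiniteMeasure τ] {h : ι × Ω → E}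
    (hint : ∀ t, Integrable (fun ω => h (t, ω)) μ) : Integrable h (τ.prod μ) := by
  classical
  have := Fintype.ofFinite ι
  have hsum : h = fun p => ∑ t, (Prod.fst ⁻¹' {t}).indicator (fun p : ι × Ω => h (t, p.2)) p := by
    ext ⟨t, ω⟩
    simp [Set.indicator_apply]
  rw [hsum]
  exact integrable_finsetSum _ fun t _ =>
    ((hint t).comp_snd τ).indicator (measurable_fst (measurableSet_singleton t))

theorem integral_uniformOn_prod [Fintype ι] [NormedSpace ℝ E] [CompleteSpace E] {h : ι × Ω → E}
    (hint : ∀ t, Integrable (fun ω => h (t, ω)) μ) :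
    ∫ p, h p ∂((uniformOn Set.univ).prod μ) =
      ∫ ω, (Fintype.card ι : ℝ)⁻¹ • ∑ t, h (t, ω) ∂μ := by
  rw [integral_prod_symm _ (integrable_prod_of_finite hint)]
  simp [uniformOn, ProbabilityTheory.cond, integral_smul_measure, integral_count]

end Averages

section Regions

/-- The pair `(c_P(U₁ⁿ), c_S(X₁ⁿ, U₂ⁿ))` of long-run costs of a design. -/
def Design.costs {n : ℕ} (c : Design n) (ω : Sample n) : ℝ × ℝ :=
  (costP (c.U1 ω), costS (c.X1 ω) (c.U2 ω))

/-- The pair `(c_P(U₁ⁿ), c_S(X₁ⁿ, U₂ⁿ))` of long-run costs of a feedback design. -/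
def FBDesign.costs {n : ℕ} (c : FBDesign n) (ω : Sample n) : ℝ × ℝ :=
  (costP (c.U1 ω), costS (c.X1 ω) (c.U2 ω))

/-- The region `R_ed` of cost pairs achievable without feedback, as a subset of the plane. -/
def region (Q N : ℝ≥0) : Set (ℝ × ℝ) := {r | achievable Q N r.1 r.2}

variable {Q N : ℝ≥0}

theorem enorm_le_ofReal_abs_add_abs (r : ℝ × ℝ) :
    ‖r‖ₑ ≤ ENNReal.ofReal (|r.1| + |r.2|) := by
  rw [← ofReal_norm]
  exact ENNReal.ofReal_le_ofReal (max_le_add_of_nonneg (abs_nonneg _) (abs_nonneg _))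

theorem ofReal_abs_add_abs_le (r : ℝ × ℝ) :
    ENNReal.ofReal (|r.1| + |r.2|) ≤ 2 * ‖r‖ₑ := by
  rw [ENNReal.ofReal_add (abs_nonneg _) (abs_nonneg _), two_mul, ← ofReal_norm]
  gcongr
  exacts [norm_fst_le r, norm_snd_le r]

theorem mem_region_iff {r : ℝ × ℝ} :
    r ∈ region Q N ↔ ∀ ε > (0 : ℝ), ∃ n₀ : ℕ, ∀ n ≥ n₀, ∃ c : Design n,
      ∫⁻ ω, ‖r - c.costs ω‖ₑ ∂(base n Q N) ≤ ENNReal.ofReal ε := by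
  constructor
  · intro h ε hε
    obtain ⟨n₀, hn₀⟩ := h ε hε
    exact ⟨n₀, fun n hn => (hn₀ n hn).imp fun c hc =>
      (lintegral_mono fun ω => enorm_le_ofReal_abs_add_abs (r - c.costs ω)).trans hc⟩
  · intro h ε hε
    obtain ⟨n₀, hn₀⟩ := h (ε / 2) (half_pos hε)
    refine ⟨n₀, fun n hn => (hn₀ n hn).imp fun c hc => ?_⟩
    calc ∫⁻ ω, ENNReal.ofReal (|r.1 - costP (c.U1 ω)| + |r.2 - costS (c.X1 ω) (c.U2 ω)|)
          ∂(base n Q N)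
        ≤ ∫⁻ ω, 2 * ‖r - c.costs ω‖ₑ ∂(base n Q N) :=
          lintegral_mono fun ω => ofReal_abs_add_abs_le (r - c.costs ω)
      _ = 2 * ∫⁻ ω, ‖r - c.costs ω‖ₑ ∂(base n Q N) :=
          lintegral_const_mul' _ _ ENNReal.ofNat_ne_top
      _ ≤ ENNReal.ofReal 2 * ENNReal.ofReal (ε / 2) := by
          rw [ENNReal.ofReal_ofNat]
          gcongr
      _ = ENNReal.ofReal ε := by
          rw [← ENNReal.ofReal_mul zero_le_two, mul_div_cancel₀ ε two_ne_zero]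

theorem isClosed_region (Q N : ℝ≥0) : IsClosed (region Q N) := by
  refine isClosed_of_closure_subset fun r hr => mem_region_iff.2 fun ε hε => ?_
  obtain ⟨r', hr', hdist⟩ := Metric.mem_closure_iff.1 hr (ε / 2) (half_pos hε)
  obtain ⟨n₀, hn₀⟩ := mem_region_iff.1 hr' (ε / 2) (half_pos hε)
  refine ⟨n₀, fun n hn => (hn₀ n hn).imp fun c hc => ?_⟩
  have hclose : ‖r - r'‖ₑ ≤ ENNReal.ofReal (ε / 2) := by
    rw [← ofReal_norm, ← dist_eq_norm]
    exact ENNReal.ofReal_le_ofReal hdist.le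
  calc ∫⁻ ω, ‖r - c.costs ω‖ₑ ∂(base n Q N)
      ≤ ∫⁻ ω, (‖r - r'‖ₑ + ‖r' - c.costs ω‖ₑ) ∂(base n Q N) :=
        lintegral_mono fun ω => by
          simpa only [edist_eq_enorm_sub] using edist_triangle r r' (c.costs ω)
    _ = ‖r - r'‖ₑ + ∫⁻ ω, ‖r' - c.costs ω‖ₑ ∂(base n Q N) := by
        rw [lintegral_add_left measurable_const, lintegral_const, measure_univ, mul_one]
    _ ≤ ENNReal.ofReal (ε / 2) + ENNReal.ofReal (ε / 2) := add_le_add hclose hc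
    _ = ENNReal.ofReal ε := by
        rw [← ENNReal.ofReal_add (half_pos hε).le (half_pos hε).le, add_halves]

end Regions

/-- A deterministic strategy for the one-shot problem whose encoder and decoder share the common
randomness `θ : Θ`: the encoder maps the source symbol to the control, the decoder maps the
channel output to the estimate. -/
structure OneShotStrategy (Θ : Type*) [MeasurableSpace Θ] where
  enc : Θ → ℝ → ℝ
  dec : Θ → ℝ → ℝ
  measurable_enc : Measurable (Function.uncurry enc)
  measurable_dec : Measurable (Function.uncurry dec)

/-- The joint law of the common randomness, the source symbol and the noise symbol in the one-shot
problem. -/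
abbrev oneShotLaw {Θ : Type*} [MeasurableSpace Θ] (ν : Measure Θ) (Q N : ℝ≥0) :
    Measure (Θ × ℝ × ℝ) :=
  ν.prod ((gaussianReal 0 Q).prod (gaussianReal 0 N))

theorem measurePreserving_unzip_oneShotLaw {Θ : Type*} [MeasurableSpace Θ]
    (n : ℕ) (ν : Measure Θ) [SigmaFinite ν] (Q N : ℝ≥0) :
    MeasurePreserving
      (fun q : Fin n → Θ × ℝ × ℝ =>
        (fun t => (q t).1, fun t => (q t).2.1, fun t => (q t).2.2))
      (Measure.pi fun _ => oneShotLaw ν Q N)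
      ((Measure.pi fun _ => ν).prod ((iidGaussian n Q).prod (iidGaussian n N))) :=
  ((MeasurePreserving.id _).prod (measurePreserving_arrowProdEquivProdArrow ℝ ℝ (Fin n)
    (fun _ => gaussianReal 0 Q) (fun _ => gaussianReal 0 N))).comp
    (measurePreserving_arrowProdEquivProdArrow Θ (ℝ × ℝ) (Fin n) (fun _ => ν)
      (fun _ => (gaussianReal 0 Q).prod (gaussianReal 0 N)))

namespace OneShotStrategy

variable {Θ : Type*} [MeasurableSpace Θ] (s : OneShotStrategy Θ)

/-- The input cost and the estimation cost in the one-shot problem, as a function of the common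
randomness, the source symbol and the noise symbol. -/
def costs (p : Θ × ℝ × ℝ) : ℝ × ℝ :=
  (s.enc p.1 p.2.1 ^ 2,
    (p.2.1 + s.enc p.1 p.2.1 - s.dec p.1 (p.2.1 + s.enc p.1 p.2.1 + p.2.2)) ^ 2)

theorem measurable_costs : Measurable s.costs := by
  have henc : Measurable fun p : Θ × ℝ × ℝ => s.enc p.1 p.2.1 :=
    s.measurable_enc.comp (measurable_fst.prodMk measurable_snd.fst)
  have hdec : Measurable fun p : Θ × ℝ × ℝ => s.dec p.1 (p.2.1 + s.enc p.1 p.2.1 + p.2.2) :=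
    s.measurable_dec.comp
      (measurable_fst.prodMk ((measurable_snd.fst.add henc).add measurable_snd.snd))
  exact (henc.pow_const 2).prodMk (((measurable_snd.fst.add henc).sub hdec).pow_const 2)

/-- The memoryless deterministic design that plays at time `t` the one-shot strategy with common
randomness `θ t`. -/
def toDesign {n : ℕ} (θ : Fin n → Θ) : Design n where
  enc t x _ := s.enc (θ t) (x t)
  dec t y _ := s.dec (θ t) (y t)
  enc_meas t := s.measurable_enc.comp
    (measurable_const.prodMk ((measurable_pi_apply t).comp measurable_fst))
  dec_meas t := s.measurable_dec.comp
    (measurable_const.prodMk ((measurable_pi_apply t).comp measurable_fst))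
  enc_causal t _ _ _ h := by rw [h t le_rfl]
  dec_causal t _ _ _ h := by rw [h t le_rfl]

/-- The average of the one-shot costs over a block of common randomness, source and noise. -/
def blockCosts {n : ℕ} (q : (Fin n → Θ) × Path n × Path n) : ℝ × ℝ :=
  (n : ℝ)⁻¹ • ∑ t, s.costs (q.1 t, q.2.1 t, q.2.2 t)

theorem costs_toDesign {n : ℕ} (θ : Fin n → Θ) (ω : Sample n) :
    (s.toDesign θ).costs ω = s.blockCosts (θ, srcX0 ω, noiseZ ω) := by
  ext <;> simp only [Design.costs, blockCosts, costP, costS, one_div, Prod.smul_fst, Prod.smul_snd,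
    Prod.fst_sum, Prod.snd_sum, smul_eq_mul] <;> rfl

theorem measurable_blockCosts {n : ℕ} : Measurable (s.blockCosts (n := n)) := by
  have := s.measurable_costs
  unfold blockCosts
  fun_prop

theorem exists_lintegral_costs_toDesign_le (n : ℕ) (ν : Measure Θ) [IsProbabilityMeasure ν]
    (Q N : ℝ≥0) (r : ℝ × ℝ) :
    ∃ θ : Fin n → Θ, ∫⁻ ω, ‖r - (s.toDesign θ).costs ω‖ₑ ∂(base n Q N) ≤
      ∫⁻ q : Fin n → Θ × ℝ × ℝ, ‖r - (n : ℝ)⁻¹ • ∑ t, s.costs (q t)‖ₑ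
        ∂(Measure.pi fun _ => oneShotLaw ν Q N) := by
  have hmeas : Measurable fun q : (Fin n → Θ) × Path n × Path n => ‖r - s.blockCosts q‖ₑ :=
    (measurable_const.sub s.measurable_blockCosts).enorm
  obtain ⟨θ, hθ⟩ := exists_le_lintegral (μ := Measure.pi fun _ : Fin n => ν)
    (hmeas.lintegral_prod_right' (ν := (iidGaussian n Q).prod (iidGaussian n N))).aemeasurable
  have hproj : MeasurePreserving (fun ω : Sample n => (srcX0 ω, noiseZ ω)) (base n Q N)
      ((iidGaussian n Q).prod (iidGaussian n N)) :=
    (MeasurePreserving.id _).prod measurePreserving_fst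
  refine ⟨θ, ?_⟩
  calc ∫⁻ ω, ‖r - (s.toDesign θ).costs ω‖ₑ ∂(base n Q N)
      = ∫⁻ xz, ‖r - s.blockCosts (θ, xz)‖ₑ ∂((iidGaussian n Q).prod (iidGaussian n N)) := by
        simp only [costs_toDesign]
        exact hproj.lintegral_comp (hmeas.comp measurable_prodMk_left)
    _ ≤ ∫⁻ q, ‖r - s.blockCosts q‖ₑ
          ∂((Measure.pi fun _ => ν).prod ((iidGaussian n Q).prod (iidGaussian n N))) := by
        rwa [lintegral_prod _ hmeas.aemeasurable]
    _ = ∫⁻ q : Fin n → Θ × ℝ × ℝ, ‖r - (n : ℝ)⁻¹ • ∑ t, s.costs (q t)‖ₑ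
          ∂(Measure.pi fun _ => oneShotLaw ν Q N) :=
        ((measurePreserving_unzip_oneShotLaw n ν Q N).lintegral_comp hmeas).symm

theorem integral_costs_mem_region (ν : Measure Θ) [IsProbabilityMeasure ν] {Q N : ℝ≥0}
    (hint : Integrable s.costs (oneShotLaw ν Q N)) :
    ∫ p, s.costs p ∂(oneShotLaw ν Q N) ∈ region Q N := by
  refine mem_region_iff.2 fun ε hε => ?_
  have hlln := tendsto_eLpNorm_average_sub_integral le_rfl ENNReal.one_ne_top s.measurable_costs
    (memLp_one_iff_integrable.2 hint)
  obtain ⟨n₀, hn₀⟩ := Filter.eventually_atTop.1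
    (hlln.eventually (gt_mem_nhds (ENNReal.ofReal_pos.2 hε)))
  refine ⟨n₀, fun n hn => ?_⟩
  obtain ⟨θ, hθ⟩ := s.exists_lintegral_costs_toDesign_le n ν Q N
    (∫ p, s.costs p ∂(oneShotLaw ν Q N))
  refine ⟨s.toDesign θ, hθ.trans ?_⟩
  simpa only [eLpNorm_one_eq_lintegral_enorm, enorm_sub_rev] using (hn₀ n hn).le

end OneShotStrategy

section Resampling

variable {n : ℕ}

/-- The sample `ω` with the source and noise symbols at time `t` replaced by `a` and `b`. Drawing
`a` and `b` afresh makes them independent of the retained `ω` without changing the law of the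
sample. -/
def resample (t : Fin n) (ω : Sample n) (a b : ℝ) : Sample n :=
  (Function.update (srcX0 ω) t a, Function.update (noiseZ ω) t b, seedV ω, seedW ω)

theorem srcX0_resample (t : Fin n) (ω : Sample n) (a b : ℝ) :
    srcX0 (resample t ω a b) t = a := by
  simp [srcX0, resample]

theorem noiseZ_resample (t : Fin n) (ω : Sample n) (a b : ℝ) :
    noiseZ (resample t ω a b) t = b := by
  simp [noiseZ, resample]

theorem measurePreserving_resample (Q N : ℝ≥0) (t : Fin n) :
    MeasurePreserving (fun q : Sample n × ℝ × ℝ => resample t q.1 q.2.1 q.2.2)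
      ((base n Q N).prod ((gaussianReal 0 Q).prod (gaussianReal 0 N))) (base n Q N) := by
  have hsrc := measurePreserving_update (fun _ : Fin n => gaussianReal 0 Q) t
  have hnoise := measurePreserving_update (fun _ : Fin n => gaussianReal 0 N) t
  have hseeds := MeasurePreserving.id ((iidGaussian n 1).prod (iidGaussian n 1))
  exact (hsrc.prod ((hnoise.prod hseeds).comp (measurePreserving_prod_right_comm _ _ _))).comp
    (measurePreserving_prod_prod_prod_comm _ _ _ _)

theorem measurePreserving_resample_random_time (τ : Measure (Fin n)) [SFinite τ] (Q N : ℝ≥0) :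
    MeasurePreserving
      (fun p : (Fin n × Sample n) × ℝ × ℝ => (p.1.1, resample p.1.1 p.1.2 p.2.1 p.2.2))
      (oneShotLaw (τ.prod (base n Q N)) Q N) (τ.prod (base n Q N)) :=
  ((MeasurePreserving.id τ).skew_product
    (measurable_from_prod_countable_right fun t => (measurePreserving_resample Q N t).measurable)
    (.of_forall fun t => (measurePreserving_resample Q N t).map_eq)).comp
    (measurePreserving_prodAssoc _ _ _)

end Resampling

namespace FBDesign

variable {n : ℕ} (c : FBDesign n)

theorem U1_apply (ω : Sample n) (t : Fin n) :
    c.U1 ω t = c.enc t (srcX0 ω) (c.Y1 ω) (seedV ω t) := by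
  rw [U1, fbCtrl, dif_pos t.isLt]
  exact c.enc_causal t _ _ _ _ _ (fun _ _ => rfl) fun s hs => dif_pos hs

theorem measurable_U1_apply (t : Fin n) : Measurable fun ω => c.U1 ω t := by
  induction t using WellFoundedLT.induction with
  | _ t ih =>
    let past (ω : Sample n) (s : Fin n) : ℝ := if s < t then c.Y1 ω s else 0
    have hpast : Measurable past := by
      refine measurable_pi_iff.2 fun s => ?_
      by_cases hs : s < t
      · simp only [past, if_pos hs]
        exact (((measurable_pi_apply s).comp measurable_fst).add (ih s hs)).add
          ((measurable_pi_apply s).comp measurable_snd.fst)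
      · simp only [past, if_neg hs, measurable_const]
    have hU : (fun ω => c.U1 ω t) = fun ω => c.enc t (srcX0 ω) (past ω) (seedV ω t) := by
      ext ω
      rw [U1_apply]
      exact c.enc_causal t _ _ _ _ _ (fun _ _ => rfl) fun s hs => (if_pos hs).symm
    rw [hU]
    exact (c.enc_meas t).comp ((measurable_fst.prodMk hpast).prodMk
      ((measurable_pi_apply t).comp measurable_snd.snd.fst))

theorem measurable_X1_apply (t : Fin n) : Measurable fun ω => c.X1 ω t :=
  ((measurable_pi_apply t).comp measurable_fst).add (c.measurable_U1_apply t)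

theorem measurable_Y1 : Measurable c.Y1 :=
  measurable_pi_iff.2 fun t =>
    (c.measurable_X1_apply t).add ((measurable_pi_apply t).comp measurable_snd.fst)

theorem measurable_U2_apply (t : Fin n) : Measurable fun ω => c.U2 ω t :=
  (c.dec_meas t).comp
    (c.measurable_Y1.prodMk ((measurable_pi_apply t).comp measurable_snd.snd.snd))

/-- The contribution of time `t` to the long-run costs. -/
def stageCosts (t : Fin n) (ω : Sample n) : ℝ × ℝ :=
  (c.U1 ω t ^ 2, (c.X1 ω t - c.U2 ω t) ^ 2)

theorem measurable_stageCosts (t : Fin n) : Measurable (c.stageCosts t) :=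
  ((c.measurable_U1_apply t).pow_const 2).prodMk
    (((c.measurable_X1_apply t).sub (c.measurable_U2_apply t)).pow_const 2)

theorem costs_eq_average (ω : Sample n) : c.costs ω = (n : ℝ)⁻¹ • ∑ t, c.stageCosts t ω := by
  ext <;> simp only [costs, stageCosts, costP, costS, one_div, Prod.smul_fst, Prod.smul_snd,
    Prod.fst_sum, Prod.snd_sum, smul_eq_mul]

theorem measurable_costs : Measurable c.costs := by
  have := c.measurable_stageCosts
  rw [funext c.costs_eq_average]
  fun_prop

theorem integrable_stageCosts {μ : Measure (Sample n)} (hint : Integrable c.costs μ)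
    (t : Fin n) : Integrable (c.stageCosts t) μ := by
  have hsum : Integrable (fun ω => ∑ t, c.stageCosts t ω) μ := by
    refine (hint.smul (n : ℝ)).congr (.of_forall fun ω => ?_)
    rw [Pi.smul_apply, costs_eq_average, smul_inv_smul₀ (Nat.cast_ne_zero.2 t.pos.ne')]
  have hmeas (t : Fin n) := (c.measurable_stageCosts t).aestronglyMeasurable (μ := μ)
  refine Integrable.prodMk (f := fun ω => (c.stageCosts t ω).1) (g := fun ω => (c.stageCosts t ω).2)
    (integrable_of_integrable_sum_of_nonneg (fun t => (hmeas t).fst) (fun t ω => sq_nonneg _) ?_ t)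
    (integrable_of_integrable_sum_of_nonneg (fun t => (hmeas t).snd) (fun t ω => sq_nonneg _) ?_ t)
  · simpa only [Prod.fst_sum] using hsum.fst
  · simpa only [Prod.snd_sum] using hsum.snd

section Freezing

theorem Y1_resample_of_lt {s t : Fin n} (hst : s < t) (ω : Sample n) (a b : ℝ) :
    c.Y1 (resample t ω a b) s = c.Y1 ω s := by
  induction s using WellFoundedLT.induction with
  | _ s ih =>
    have hupdate (x : Path n) (d : ℝ) {r : Fin n} (hr : r ≤ s) : Function.update x t d r = x r :=
      Function.update_of_ne (hr.trans_lt hst).ne d x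
    have hU : c.U1 (resample t ω a b) s = c.U1 ω s := by
      rw [U1_apply, U1_apply]
      exact c.enc_causal s _ _ _ _ _ (fun r hr => hupdate _ _ hr)
        fun r hr => ih r hr (hr.trans hst)
    rw [Y1, Y1, X1, X1, hU]
    exact congrArg₂ (fun x z => x + c.U1 ω s + z) (hupdate _ _ le_rfl) (hupdate _ _ le_rfl)

/-- The one-shot strategy played by a feedback design at time `θ.1`, the common randomness `θ`
consisting of the time and of a sample whose source and noise symbols at that time are ignored. -/
def freeze : OneShotStrategy (Fin n × Sample n) where
  enc θ a := c.enc θ.1 (Function.update (srcX0 θ.2) θ.1 a) (c.Y1 θ.2) (seedV θ.2 θ.1)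
  dec θ y := c.dec θ.1 (Function.update (c.Y1 θ.2) θ.1 y) (seedW θ.2 θ.1)
  measurable_enc := measurable_uncurry_of_countable_fst fun t =>
    (c.enc_meas t).comp (((measurable_update'.comp
      (measurable_fst.fst.prodMk measurable_snd)).prodMk
      (c.measurable_Y1.comp measurable_fst)).prodMk
      ((measurable_pi_apply t).comp measurable_fst.snd.snd.fst))
  measurable_dec := measurable_uncurry_of_countable_fst fun t =>
    (c.dec_meas t).comp ((measurable_update'.comp
      ((c.measurable_Y1.comp measurable_fst).prodMk measurable_snd)).prodMk
      ((measurable_pi_apply t).comp measurable_fst.snd.snd.snd))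

variable (t : Fin n) (ω : Sample n) (a b : ℝ)

theorem U1_resample : c.U1 (resample t ω a b) t = c.freeze.enc (t, ω) a := by
  rw [U1_apply]
  exact c.enc_causal t _ _ _ _ _ (fun _ _ => rfl) fun s hs => c.Y1_resample_of_lt hs ω a b

theorem X1_resample : c.X1 (resample t ω a b) t = a + c.freeze.enc (t, ω) a := by
  rw [X1, U1_resample, srcX0_resample]

theorem Y1_resample : c.Y1 (resample t ω a b) t = a + c.freeze.enc (t, ω) a + b := by
  rw [Y1, X1_resample, noiseZ_resample]

theorem U2_resample :
    c.U2 (resample t ω a b) t = c.freeze.dec (t, ω) (a + c.freeze.enc (t, ω) a + b) := by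
  refine c.dec_causal t _ _ _ fun s hs => ?_
  rcases hs.eq_or_lt with rfl | hs
  · rw [Y1_resample, Function.update_self]
  · rw [Y1_resample_of_lt c hs, Function.update_of_ne hs.ne]

theorem stageCosts_resample :
    c.stageCosts t (resample t ω a b) = c.freeze.costs ((t, ω), a, b) := by
  simp only [stageCosts, OneShotStrategy.costs, U1_resample, X1_resample, U2_resample]

end Freezing

theorem integral_costs_mem_region [NeZero n] {Q N : ℝ≥0}
    (hint : Integrable c.costs (base n Q N)) : ∫ ω, c.costs ω ∂(base n Q N) ∈ region Q N := by
  let τ : Measure (Fin n) := uniformOn Set.univ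
  let stage : Fin n × Sample n → ℝ × ℝ := fun p => c.stageCosts p.1 p.2
  have hstage : Integrable stage (τ.prod (base n Q N)) :=
    integrable_prod_of_finite (c.integrable_stageCosts hint)
  have hresample := measurePreserving_resample_random_time τ Q N
  have hfreeze : c.freeze.costs =
      stage ∘ fun p => (p.1.1, resample p.1.1 p.1.2 p.2.1 p.2.2) := by
    ext1 ⟨⟨t, ω⟩, a, b⟩
    exact (c.stageCosts_resample t ω a b).symm
  have hmean : ∫ ω, c.costs ω ∂(base n Q N) =
      ∫ p, c.freeze.costs p ∂(oneShotLaw (τ.prod (base n Q N)) Q N) :=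
    calc ∫ ω, c.costs ω ∂(base n Q N) = ∫ p, stage p ∂(τ.prod (base n Q N)) := by
          rw [integral_uniformOn_prod (c.integrable_stageCosts hint), Fintype.card_fin]
          simp only [costs_eq_average, stage]
      _ = ∫ p, c.freeze.costs p ∂(oneShotLaw (τ.prod (base n Q N)) Q N) := by
          rw [hfreeze, hresample.hasLaw.integral_comp hstage.aestronglyMeasurable]
  rw [hmean]
  exact c.freeze.integral_costs_mem_region _
    (hfreeze ▸ hresample.integrable_comp_of_integrable hstage)

end FBDesign

theorem achievable_of_achievableFB {Q N : ℝ≥0} {P S : ℝ} (h : achievableFB Q N P S) :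
    achievable Q N P S := by
  suffices (P, S) ∈ closure (region Q N) from (isClosed_region Q N).closure_subset this
  refine Metric.mem_closure_iff.2 fun ε hε => ?_
  obtain ⟨n₀, hn₀⟩ := h (ε / 2) (half_pos hε)
  obtain ⟨c, hc⟩ := hn₀ (n₀ + 1) n₀.le_succ
  have hdev : ∫⁻ ω, ‖(P, S) - c.costs ω‖ₑ ∂(base (n₀ + 1) Q N) ≤ ENNReal.ofReal (ε / 2) :=
    (lintegral_mono fun ω => enorm_le_ofReal_abs_add_abs ((P, S) - c.costs ω)).trans hc
  have hint : Integrable c.costs (base (n₀ + 1) Q N) := by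
    have hsub : Integrable (fun ω => (P, S) - c.costs ω) (base (n₀ + 1) Q N) :=
      ⟨(measurable_const.sub c.measurable_costs).aestronglyMeasurable,
        hdev.trans_lt ENNReal.ofReal_lt_top⟩
    exact ((integrable_const (P, S)).sub hsub).congr (.of_forall fun ω => sub_sub_cancel _ _)
  refine ⟨_, c.integral_costs_mem_region hint, ?_⟩
  have hmean := (enorm_sub_integral_le_lintegral hint (P, S)).trans hdev
  rw [← ofReal_norm, ENNReal.ofReal_le_ofReal_iff (half_pos hε).le, ← dist_eq_norm] at hmean
  exact hmean.trans_lt (half_lt_self hε)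

/-- A design without feedback, regarded as a feedback design whose encoder ignores the past
channel outputs. -/
def Design.toFBDesign {n : ℕ} (c : Design n) : FBDesign n where
  enc t x _ v := c.enc t x v
  dec := c.dec
  enc_meas t := (c.enc_meas t).comp (measurable_fst.fst.prodMk measurable_snd)
  dec_meas := c.dec_meas
  enc_causal t _ _ _ _ v hx _ := c.enc_causal t _ _ v hx
  dec_causal := c.dec_causal

theorem Design.costs_toFBDesign {n : ℕ} (c : Design n) : c.toFBDesign.costs = c.costs := by
  have hU1 : c.toFBDesign.U1 = c.U1 := by
    ext ω t
    exact c.toFBDesign.U1_apply ω t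
  have hX1 : c.toFBDesign.X1 = c.X1 := by
    ext ω t
    rw [FBDesign.X1, Design.X1, hU1]
  have hY1 : c.toFBDesign.Y1 = c.Y1 := by
    ext ω t
    rw [FBDesign.Y1, Design.Y1, hX1]
  have hU2 : c.toFBDesign.U2 = c.U2 := by
    ext ω t
    rw [FBDesign.U2, Design.U2, hY1]
    rfl
  ext1 ω
  rw [FBDesign.costs, Design.costs, hU1, hX1, hU2]

theorem achievableFB_of_achievable {Q N : ℝ≥0} {P S : ℝ} (h : achievable Q N P S) :
    achievableFB Q N P S := by
  intro ε hε
  obtain ⟨n₀, hn₀⟩ := h ε hε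
  refine ⟨n₀, fun n hn => ?_⟩
  obtain ⟨c, hc⟩ := hn₀ n hn
  refine ⟨c.toFBDesign, (lintegral_congr fun ω => ?_).trans_le hc⟩
  exact congrArg (fun r : ℝ × ℝ => ENNReal.ofReal (|P - r.1| + |S - r.2|))
    (congrFun c.costs_toFBDesign ω)

/-- **Theorem 2** (channel feedback does not help when both decision makers are causal):
a pair of costs is achievable with causal encoding with strictly causal channel feedback and
causal decoding if and only if it is achievable with causal encoding (no feedback) and causal
decoding, i.e. `R_{ed,f} = R_ed`. -/
theorem feedback_region_eq (Q N : ℝ≥0) (hQ : 0 < Q) (hN : 0 < N) (P S : ℝ) :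
    achievableFB Q N P S ↔ achievable Q N P S :=
  ⟨achievable_of_achievableFB, achievableFB_of_achievable⟩

end

end Witsenhausen
end

section
/- Converse structural lemma with feedback and feed-forward (Appendix B): Let n ∈ ℕ and let c ∈ C_{ed,f,f}(n) be any control design in which the causal encoder at time t observes (X_0^t, Y_1^{t−1}) and the causal decoder at time t observes (Y_1^t, X_0^{t−1}). Let Q be uniform on {1,…,n}, independent of all other variables, define X_0 = X_{0,Q}, U_1 = U_{1,Q}, X_1 = X_{1,Q}, Y_1 = Y_{1,Q}, U_2 = U_{2,Q}, and the auxiliary random variable T = ((X_0^{Q−1}, Y_1^{Q−1}), Q). Then: (i) X_0 is independent of T; (ii) (X_1, Y_1) is conditionally independent of T given (X_0, U_1), with conditional law given by the Witsenhausen channel; and (iii) U_2 is conditionally independent of (X_0, U_1, X_1) given (T, Y_1). Consequently the single-letter joint distribution of (X_0, T, U_1, X_1, Y_1, U_2) decomposes as P_{X_0} P_T P_{U_1|X_0,T} P_{X_1,Y_1|X_0,U_1} P_{U_2|T,Y_1}. -/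
/-!
Formalization of results from "Causal Vector-valued Witsenhausen Counterexamples with
Feedback" (Zhao, Le Treust, Oechtering).

Stochastic encoders/decoders (stochastic kernels) are realized as measurable functions of
independent i.i.d. randomization seeds, which is equivalent to the kernel formulation on
standard Borel spaces.
-/

open MeasureTheory ProbabilityTheory
open scoped ENNReal NNReal

namespace Witsenhausen

noncomputable section

/-- A single-letter joint distribution of `(X₀, T, U₁, X₁, Y₁, U₂)` decomposing according to
`P_{X₀} P_T P_{U₁|X₀,T} P_{X₁,Y₁|X₀,U₁} P_{U₂|T,Y₁}`: it is described by the distribution of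
the time-sharing variable `T` (independent of `X₀ ~ N(0,Q)`), the conditional kernel
`P_{U₁|X₀,T}`, and the conditional kernel `P_{U₂|T,Y₁}`; the Witsenhausen channel
`P_{X₁,Y₁|X₀,U₁}` is fixed. -/
structure SLDecomp (Q N : ℝ≥0) (T : Type) [MeasurableSpace T] where
  /-- the distribution `P_T` of the time-sharing variable -/
  μT : Measure T
  probT : IsProbabilityMeasure μT
  /-- the conditional distribution `P_{U₁|X₀,T}` -/
  κ1 : Kernel (ℝ × T) ℝ
  markov1 : IsMarkovKernel κ1
  /-- the conditional distribution `P_{U₂|T,Y₁}` -/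
  κ2 : Kernel (T × ℝ) ℝ
  markov2 : IsMarkovKernel κ2

attribute [instance] SLDecomp.probT SLDecomp.markov1 SLDecomp.markov2

namespace SLDecomp

/-- canonical coordinates `((((X₀, T), U₁), Z₁), U₂)` -/
abbrev Space (T : Type) : Type := (((ℝ × T) × ℝ) × ℝ) × ℝ

variable {Q N : ℝ≥0} {T : Type} [MeasurableSpace T]

def sX0 (q : Space T) : ℝ := q.1.1.1.1
def sT (q : Space T) : T := q.1.1.1.2
def sU1 (q : Space T) : ℝ := q.1.1.2
def sZ (q : Space T) : ℝ := q.1.2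
def sU2 (q : Space T) : ℝ := q.2
def sX1 (q : Space T) : ℝ := sX0 q + sU1 q
def sY1 (q : Space T) : ℝ := sX1 q + sZ q

/-- The joint law `P_{X₀} P_T P_{U₁|X₀,T} P_{X₁,Y₁|X₀,U₁} P_{U₂|T,Y₁}` on the canonical
space: `(X₀, T) ~ N(0,Q) ⊗ P_T`, then `U₁ ~ P_{U₁|X₀,T}`, then the memoryless Witsenhausen
channel is realized by an independent noise `Z₁ ~ N(0,N)` through `X₁ = X₀ + U₁` and
`Y₁ = X₁ + Z₁`, and finally `U₂ ~ P_{U₂|T,Y₁}`. -/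
def measure (d : SLDecomp Q N T) : Measure (Space T) :=
  ((((gaussianReal 0 Q).prod d.μT) ⊗ₘ d.κ1).prod (gaussianReal 0 N)) ⊗ₘ
    (d.κ2.comap (fun q : ((ℝ × T) × ℝ) × ℝ => (q.1.1.2, q.1.1.1 + q.1.2 + q.2))
      (by fun_prop))

instance (d : SLDecomp Q N T) : IsProbabilityMeasure d.measure := by
  unfold measure; infer_instance

/-- The induced single-letter joint law of `(X₀, T, U₁, X₁, Y₁, U₂)`. -/
def joint (d : SLDecomp Q N T) : Measure (ℝ × T × ℝ × ℝ × ℝ × ℝ) :=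
  d.measure.map (fun q => (sX0 q, sT q, sU1 q, sX1 q, sY1 q, sU2 q))

/-- The pair `(P, S)` consists of the expected single-letter Witsenhausen costs of the
decomposed distribution: `P = E[U₁²]` and `S = E[(X₁ - U₂)²]` (both finite). -/
def realizes (d : SLDecomp Q N T) (P S : ℝ) : Prop :=
  Integrable (fun q => (sU1 q) ^ 2) d.measure ∧
  Integrable (fun q => (sX1 q - sU2 q) ^ 2) d.measure ∧
  P = ∫ q, (sU1 q) ^ 2 ∂d.measure ∧
  S = ∫ q, (sX1 q - sU2 q) ^ 2 ∂d.measure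

end SLDecomp

/-- The memoryless Witsenhausen channel `P_{X₁,Y₁|X₀,U₁}`, mapping `(x₀, u₁)` to the joint law
of `(X₁, Y₁) = (x₀ + u₁, x₀ + u₁ + Z₁)` with `Z₁ ~ N(0,N)`. -/
def witChannel (N : ℝ≥0) : Kernel (ℝ × ℝ) (ℝ × ℝ) :=
  ((Kernel.id : Kernel (ℝ × ℝ) (ℝ × ℝ)) ⊗ₖ Kernel.const _ (gaussianReal 0 N)).map
    (fun q => (q.1.1 + q.1.2, q.1.1 + q.1.2 + q.2))

/-- A control design with causal encoder with (strictly causal) channel feedback and causal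
decoder with (strictly causal) source feed-forward: at time `t` the encoder observes
`(X₀^t, Y₁^{t-1})` and the decoder observes `(Y₁^t, X₀^{t-1})`. -/
structure FBFFDesign (n : ℕ) where
  enc : Fin n → Path n → Path n → ℝ → ℝ
  dec : Fin n → Path n → Path n → ℝ → ℝ
  enc_meas : ∀ t, Measurable fun p : (Path n × Path n) × ℝ => enc t p.1.1 p.1.2 p.2
  dec_meas : ∀ t, Measurable fun p : (Path n × Path n) × ℝ => dec t p.1.1 p.1.2 p.2
  /-- the encoder observes the source causally and the channel output strictly causally -/
  enc_causal : ∀ (t : Fin n) (x x' y y' : Path n) (v : ℝ),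
    (∀ s, s ≤ t → x s = x' s) → (∀ s, s < t → y s = y' s) →
      enc t x y v = enc t x' y' v
  /-- the decoder observes the channel output causally and the source strictly causally -/
  dec_causal : ∀ (t : Fin n) (y y' x x' : Path n) (w : ℝ),
    (∀ s, s ≤ t → y s = y' s) → (∀ s, s < t → x s = x' s) →
      dec t y x w = dec t y' x' w

namespace FBFFDesign

variable {n : ℕ} (c : FBFFDesign n)

/-- The control sequence `U₁ⁿ` (defined recursively through the feedback loop). -/
def U1 (ω : Sample n) : Path n := fun t => fbCtrl c.enc (srcX0 ω) (noiseZ ω) (seedV ω) t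
/-- The interim state `X₁ⁿ = X₀ⁿ + U₁ⁿ`. -/
def X1 (ω : Sample n) : Path n := fun t => srcX0 ω t + c.U1 ω t
/-- The channel output `Y₁ⁿ = X₁ⁿ + Z₁ⁿ`. -/
def Y1 (ω : Sample n) : Path n := fun t => c.X1 ω t + noiseZ ω t
/-- The estimate sequence `U₂ⁿ`. -/
def U2 (ω : Sample n) : Path n := fun t => c.dec t (c.Y1 ω) (srcX0 ω) (seedW ω t)

end FBFFDesign

/-- The region `R_{ed,f,f}`: achievable pairs of costs with channel feedback at the encoder
and source feed-forward at the decoder. -/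
def achievableFBFF (Q N : ℝ≥0) (P S : ℝ) : Prop :=
  ∀ ε > (0 : ℝ), ∃ n₀ : ℕ, ∀ n ≥ n₀, ∃ c : FBFFDesign n,
    (∫⁻ ω, ENNReal.ofReal
        (|P - costP (c.U1 ω)| + |S - costS (c.X1 ω) (c.U2 ω)|) ∂(base n Q N))
      ≤ ENNReal.ofReal ε

/-- The uniform random time `Q ~ Unif{1, …, n}`. -/
def uniformTime (n : ℕ) [NeZero n] : Measure (Fin n) :=
  (PMF.uniformOfFintype (Fin n)).toMeasure

instance (n : ℕ) [NeZero n] : IsProbabilityMeasure (uniformTime n) := by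
  unfold uniformTime; infer_instance

/-- Sample space extended by the independent uniform random time. -/
abbrev TimedSample (n : ℕ) : Type := Sample n × Fin n

/-- The base randomness extended by an independent uniform random time. -/
def timedBase (n : ℕ) [NeZero n] (Q N : ℝ≥0) : Measure (TimedSample n) :=
  (base n Q N).prod (uniformTime n)

instance (n : ℕ) [NeZero n] (Q N : ℝ≥0) : IsProbabilityMeasure (timedBase n Q N) := by
  unfold timedBase; infer_instance

namespace FBFFDesign

variable {n : ℕ} (c : FBFFDesign n)

/-- The single-letter source symbol `X₀ = X_{0,Q}` at the random time. -/
def tX0 (_c : FBFFDesign n) (ω : TimedSample n) : ℝ := srcX0 ω.1 ω.2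
/-- The single-letter control `U₁ = U_{1,Q}`. -/
def tU1 (ω : TimedSample n) : ℝ := c.U1 ω.1 ω.2
/-- The single-letter interim state `X₁ = X_{1,Q}`. -/
def tX1 (ω : TimedSample n) : ℝ := c.X1 ω.1 ω.2
/-- The single-letter channel output `Y₁ = Y_{1,Q}`. -/
def tY1 (ω : TimedSample n) : ℝ := c.Y1 ω.1 ω.2
/-- The single-letter estimate `U₂ = U_{2,Q}`. -/
def tU2 (ω : TimedSample n) : ℝ := c.U2 ω.1 ω.2
/-- The auxiliary random variable `T = ((X₀^{Q-1}, Y₁^{Q-1}), Q)`, where the strict prefixes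
are encoded as paths padded with `0` from time `Q` on. -/
def tT (ω : TimedSample n) : (Path n × Path n) × Fin n :=
  ((fun s => if (s : ℕ) < (ω.2 : ℕ) then srcX0 ω.1 s else 0,
    fun s => if (s : ℕ) < (ω.2 : ℕ) then c.Y1 ω.1 s else 0), ω.2)

end FBFFDesign

/-!
Redrawing, at the random time `Q`, the source symbol, the channel noise or the decoder seed
preserves the law of the timed sample. Causality keeps unchanged everything that was generated
before the redrawn symbol entered the loop, and a variable that ignores a fresh draw is
independent of it. Hence `X₀` is independent of `T`, the noise `Z` is independent of
`(X₀, T, U₁)`, and the decoder seed is independent of `(X₀, T, U₁, Z)`. Now `(X₁, Y₁)` is a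
function of `(X₀, U₁)` and `Z`; and since `(T, Y₁)` is exactly what the decoder observes, `U₂` is
a function of `(T, Y₁)` and the decoder seed.
-/

section ConditionalLaws

variable {Ω α β γ δ : Type*} [MeasurableSpace Ω] [MeasurableSpace α] [MeasurableSpace β]
  [MeasurableSpace γ] [MeasurableSpace δ]

/-- The kernel `b ↦ law of φ (b, Z)` for a noise `Z ~ ν`: the conditional law given `b` of a
function of `b` and an independent noise. -/
def noiseKernel (ν : Measure γ) (φ : β × γ → δ) : Kernel β δ :=
  (Kernel.id ×ₖ Kernel.const β ν).map φ

lemma noiseKernel_apply (ν : Measure γ) [SFinite ν] {φ : β × γ → δ}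
    (hφ : Measurable φ) (b : β) : noiseKernel ν φ b = ν.map fun z => φ (b, z) := by
  rw [noiseKernel, Kernel.map_apply _ hφ, Kernel.prod_apply, Kernel.id_apply, Kernel.const_apply,
    Measure.dirac_prod, Measure.map_map hφ measurable_prodMk_left]
  rfl

lemma isMarkovKernel_noiseKernel (ν : Measure γ) [IsProbabilityMeasure ν] {φ : β × γ → δ}
    (hφ : Measurable φ) : IsMarkovKernel (noiseKernel ν φ) :=
  Kernel.IsMarkovKernel.map _ hφ

variable {μ : Measure Ω} [IsFiniteMeasure μ]

lemma hasCondDistrib_comap_noiseKernel {ν : Measure γ} [SFinite ν] {A : Ω → α}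
    {Z : Ω → γ} (hA : AEMeasurable A μ) (hZ : HasLaw Z ν μ) (hAZ : IndepFun A Z μ)
    {p : α → β} {hp : Measurable p} {φ : β × γ → δ} (hφ : Measurable φ) {Y : Ω → δ}
    (hY : ∀ ω, Y ω = φ (p (A ω), Z ω)) :
    HasCondDistrib Y A ((noiseKernel ν φ).comap p hp) μ := by
  obtain rfl : Y = fun ω => φ (p (A ω), Z ω) := funext hY
  have : IsSFiniteKernel (noiseKernel ν φ) := by unfold noiseKernel; infer_instance
  have hF : Measurable fun q : α × γ => (q.1, φ (p q.1, q.2)) := by fun_prop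
  have hprod : ((μ.map A).prod ν).map (fun q => (q.1, φ (p q.1, q.2))) =
      μ.map A ⊗ₘ (noiseKernel ν φ).comap p hp := by
    ext s hs
    rw [Measure.map_apply hF hs, Measure.prod_apply (hF hs), Measure.compProd_apply hs]
    refine lintegral_congr fun a => ?_
    rw [Kernel.comap_apply, noiseKernel_apply ν hφ,
      Measure.map_apply (by fun_prop) (measurable_prodMk_left hs)]
    rfl
  have hlaw : HasLaw (fun ω => (A ω, Z ω)) ((μ.map A).prod ν) μ :=
    hAZ.hasLaw_prod ⟨hA, rfl⟩ hZ
  exact HasLaw.comp ⟨hF.aemeasurable, hprod⟩ hlaw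

variable [StandardBorelSpace δ] [Nonempty δ]

lemma condDistrib_ae_eq_of_hasCondDistrib {Y : Ω → δ} {X : Ω → α} {κ : Kernel α δ}
    [IsFiniteKernel κ] (h : HasCondDistrib Y X κ μ) : condDistrib Y X μ =ᵐ[μ.map X] κ :=
  condDistrib_ae_eq_of_measure_eq_compProd X h.aemeasurable_snd h.map_eq

lemma condDistrib_ae_eq_comp_of_hasCondDistrib_comap {Y : Ω → δ} {X : Ω → α} {p : α → β}
    {hp : Measurable p} {κ : Kernel β δ} [IsFiniteKernel κ]
    (h : HasCondDistrib Y X (κ.comap p hp) μ) :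
    ∀ᵐ x ∂μ.map X, condDistrib Y X μ x = condDistrib Y (fun ω => p (X ω)) μ (p x) := by
  have hpX : ∀ᵐ x ∂μ.map X, condDistrib Y (p ∘ X) μ (p x) = κ (p x) := by
    have hmap := condDistrib_ae_eq_of_hasCondDistrib h.comp_right
    rw [← AEMeasurable.map_map_of_aemeasurable hp.aemeasurable h.aemeasurable_fst] at hmap
    exact ae_of_ae_map hp.aemeasurable hmap
  filter_upwards [condDistrib_ae_eq_of_hasCondDistrib h, hpX] with x hx hpx
  exact hx.trans hpx.symm

end ConditionalLaws

section Resampling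

variable {Ω α β : Type*} [MeasurableSpace Ω] [MeasurableSpace α] [MeasurableSpace β]

/-- The map `r` redraws the value of `g` from `ν` while preserving `μ`: if `(ω, a) ~ μ ⊗ ν`, then
`r (ω, a) ~ μ`, and `a` is the value of `g` after redrawing. -/
structure IsResampling (r : Ω × α → Ω) (g : Ω → α) (μ : Measure Ω) (ν : Measure α) : Prop where
  measurePreserving : MeasurePreserving r (μ.prod ν) μ
  measurable : Measurable g
  apply_resample : ∀ ω a, g (r (ω, a)) = a

namespace IsResampling

variable {r : Ω × α → Ω} {g : Ω → α} {μ : Measure Ω} {ν : Measure α}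

lemma hasLaw [IsProbabilityMeasure μ] [SFinite ν] (h : IsResampling r g μ ν) :
    HasLaw g ν μ where
  aemeasurable := h.measurable.aemeasurable
  map_eq := calc
    μ.map g = ((μ.prod ν).map r).map g := by rw [h.measurePreserving.map_eq]
    _ = (μ.prod ν).map Prod.snd := by
      rw [Measure.map_map h.measurable h.measurePreserving.measurable]
      exact congrArg (Measure.map · _) (funext fun p => h.apply_resample p.1 p.2)
    _ = ν := measurePreserving_snd.map_eq

lemma indepFun [IsProbabilityMeasure μ] [SFinite ν] (h : IsResampling r g μ ν) {f : Ω → β}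
    (hf : Measurable f) (hfr : ∀ ω a, f (r (ω, a)) = f ω) : IndepFun f g μ := by
  have hfg : (fun ω => (f ω, g ω)) ∘ r = Prod.map f id :=
    funext fun p => Prod.ext (hfr p.1 p.2) (h.apply_resample p.1 p.2)
  rw [indepFun_iff_map_prod_eq_prod_map_map hf.aemeasurable h.measurable.aemeasurable,
    h.hasLaw.map_eq]
  calc μ.map (fun ω => (f ω, g ω)) = ((μ.prod ν).map r).map (fun ω => (f ω, g ω)) := by
        rw [h.measurePreserving.map_eq]
    _ = (μ.prod ν).map (Prod.map f id) := by
        rw [Measure.map_map (hf.prodMk h.measurable) h.measurePreserving.measurable, hfg]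
    _ = (μ.map f).prod ν := by
        rw [← Measure.map_prod_map _ _ hf measurable_id, Measure.map_id]

variable [SFinite μ] [SFinite ν]

lemma snd (h : IsResampling r g μ ν) (μ' : Measure β) [SFinite μ'] :
    IsResampling (fun p : (β × Ω) × α => (p.1.1, r (p.1.2, p.2))) (fun ω => g ω.2)
      (μ'.prod μ) ν where
  measurePreserving :=
    ((MeasurePreserving.id μ').prod h.measurePreserving).comp (measurePreserving_prodAssoc μ' μ ν)
  measurable := h.measurable.comp measurable_snd
  apply_resample ω := h.apply_resample ω.2

lemma fst (h : IsResampling r g μ ν) (μ' : Measure β) [SFinite μ'] :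
    IsResampling (fun p : (Ω × β) × α => (r (p.1.1, p.2), p.1.2)) (fun ω => g ω.1)
      (μ.prod μ') ν where
  measurePreserving :=
    (Measure.measurePreserving_swap.comp (h.snd μ').measurePreserving).comp
      (Measure.measurePreserving_swap.prod (MeasurePreserving.id ν))
  measurable := h.measurable.comp measurable_fst
  apply_resample ω := h.apply_resample ω.1

lemma randomIndex {ι : Type*} [Countable ι] [MeasurableSpace ι] [MeasurableSingletonClass ι]
    {r : ι → Ω × α → Ω} {g : ι → Ω → α} (h : ∀ i, IsResampling (r i) (g i) μ ν)
    (u : Measure ι) [SFinite u] :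
    IsResampling (fun p : (Ω × ι) × α => (r p.1.2 (p.1.1, p.2), p.1.2)) (fun ω => g ω.2 ω.1)
      (μ.prod u) ν where
  measurePreserving := by
    have hskew := MeasurePreserving.skew_product (MeasurePreserving.id u) (g := r)
      (measurable_from_prod_countable_right fun i => (h i).measurePreserving.measurable)
      (.of_forall fun i => (h i).measurePreserving.map_eq)
    exact (Measure.measurePreserving_swap.comp hskew).comp
      ((measurePreserving_prodAssoc u μ ν).comp
        (Measure.measurePreserving_swap.prod (MeasurePreserving.id ν)))
  measurable := measurable_from_prod_countable_left fun i => (h i).measurable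
  apply_resample ω := (h ω.2).apply_resample ω.1

end IsResampling

lemma isResampling_update {ι : Type*} [Fintype ι] [DecidableEq ι] {E : ι → Type*}
    [∀ i, MeasurableSpace (E i)] (ν : ∀ i, Measure (E i)) [∀ i, IsProbabilityMeasure (ν i)]
    (i : ι) :
    IsResampling (fun p : (∀ j, E j) × E i => Function.update p.1 i p.2) (fun x => x i)
      (Measure.pi ν) (ν i) where
  measurePreserving := by
    refine ⟨measurable_update', (Measure.pi_eq fun s hs => ?_).symm⟩
    have hpre : (fun p : (∀ j, E j) × E i => Function.update p.1 i p.2) ⁻¹' Set.univ.pi s =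
        Set.univ.pi (Function.update s i Set.univ) ×ˢ s i := by
      ext p
      simp only [Set.mem_preimage, Set.mem_univ_pi, Set.mem_prod]
      rw [Function.forall_update_iff p.1 fun j x => x ∈ s j,
        Function.forall_update_iff s fun j u => p.1 j ∈ u]
      simp [and_comm]
    have hupdate : (fun j => ν j (Function.update s i Set.univ j)) =
        Function.update (fun j => ν j (s j)) i 1 := by
      ext j
      rcases eq_or_ne j i with rfl | hj <;> simp [*]
    rw [Measure.map_apply measurable_update' (MeasurableSet.univ_pi hs), hpre,
      Measure.prod_prod, Measure.pi_pi, hupdate,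
      Finset.prod_update_of_mem (Finset.mem_univ i), one_mul,
      ← Finset.prod_eq_prod_sdiff_singleton_mul (Finset.mem_univ i)]
  measurable := measurable_pi_apply i
  apply_resample x a := Function.update_self i a x

end Resampling

lemma SLDecomp.exists_map_eq_joint {Q N : ℝ≥0} {𝓣 : Type} [MeasurableSpace 𝓣]
    {Ω : Type*} [MeasurableSpace Ω] {μ : Measure Ω} [IsProbabilityMeasure μ] {X₀ U₁ Z U₂ : Ω → ℝ}
    {T : Ω → 𝓣} (hX₀ : HasLaw X₀ (gaussianReal 0 Q) μ) (hT : AEMeasurable T μ)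
    (hX₀T : IndepFun X₀ T μ) (hU₁ : AEMeasurable U₁ μ) (hZ : HasLaw Z (gaussianReal 0 N) μ)
    (hU₁Z : IndepFun (fun ω => ((X₀ ω, T ω), U₁ ω)) Z μ) (κ₂ : Kernel (𝓣 × ℝ) ℝ)
    [IsMarkovKernel κ₂]
    (hU₂ : HasCondDistrib U₂ (fun ω => (((X₀ ω, T ω), U₁ ω), Z ω))
      (κ₂.comap (fun q => (q.1.1.2, q.1.1.1 + q.1.2 + q.2)) (by fun_prop)) μ) :
    ∃ d : SLDecomp Q N 𝓣,
      μ.map (fun ω => (X₀ ω, T ω, U₁ ω, X₀ ω + U₁ ω, X₀ ω + U₁ ω + Z ω, U₂ ω)) = d.joint := by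
  let d : SLDecomp Q N 𝓣 :=
    { μT := μ.map T
      probT := Measure.isProbabilityMeasure_map hT
      κ1 := condDistrib U₁ (fun ω => (X₀ ω, T ω)) μ
      markov1 := inferInstance
      κ2 := κ₂
      markov2 := inferInstance }
  have hU₁_cond : HasCondDistrib U₁ (fun ω => (X₀ ω, T ω)) d.κ1 μ :=
    ⟨by fun_prop, (compProd_map_condDistrib hU₁).symm⟩
  have hlaw : HasLaw (fun ω => ((((X₀ ω, T ω), U₁ ω), Z ω), U₂ ω)) d.measure μ :=
    (hU₁Z.hasLaw_prod ((hX₀T.hasLaw_prod hX₀ ⟨hT, rfl⟩).prodMk_of_hasCondDistrib hU₁_cond)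
      hZ).prodMk_of_hasCondDistrib hU₂
  refine ⟨d, ?_⟩
  rw [joint, ← hlaw.map_eq, AEMeasurable.map_map_of_aemeasurable _ hlaw.aemeasurable]
  · rfl
  · simp only [sX0, sT, sU1, sX1, sY1, sZ, sU2]
    fun_prop

lemma witChannel_eq_noiseKernel (N : ℝ≥0) :
    witChannel N = noiseKernel (gaussianReal 0 N) fun q => (q.1.1 + q.1.2, q.1.1 + q.1.2 + q.2) :=
  congrArg (Kernel.map · _) <|
    (Kernel.compProd_prodMkLeft_eq_comp Kernel.id (Kernel.const _ (gaussianReal 0 N))).trans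
      (Kernel.comp_id _)

instance (N : ℝ≥0) : IsMarkovKernel (witChannel N) :=
  Kernel.IsMarkovKernel.map _ (by fun_prop)

section RandomTime

variable {n : ℕ}

@[fun_prop]
lemma measurable_srcX0 : Measurable (srcX0 (n := n)) := measurable_fst

@[fun_prop]
lemma measurable_noiseZ : Measurable (noiseZ (n := n)) := measurable_snd.fst

@[fun_prop]
lemma measurable_seedV : Measurable (seedV (n := n)) := measurable_snd.snd.fst

/-- The channel noise `Z_{1,Q}` at the random time. -/
def timedZ (ω : TimedSample n) : ℝ := noiseZ ω.1 ω.2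

@[fun_prop]
lemma measurable_timedZ : Measurable (timedZ (n := n)) :=
  measurable_from_prod_countable_left fun t => (measurable_pi_apply t).comp measurable_noiseZ

/-- The decoder seed at the random time. -/
def timedW (ω : TimedSample n) : ℝ := seedW ω.1 ω.2

/-- Redraw the source symbol at the random time. -/
def resampleX0 (p : TimedSample n × ℝ) : TimedSample n :=
  ((Function.update p.1.1.1 p.1.2 p.2, p.1.1.2), p.1.2)

/-- Redraw the channel noise at the random time. -/
def resampleZ (p : TimedSample n × ℝ) : TimedSample n :=
  ((p.1.1.1, Function.update p.1.1.2.1 p.1.2 p.2, p.1.1.2.2), p.1.2)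

/-- Redraw the decoder seed at the random time. -/
def resampleW (p : TimedSample n × ℝ) : TimedSample n :=
  ((p.1.1.1, p.1.1.2.1, p.1.1.2.2.1, Function.update p.1.1.2.2.2 p.1.2 p.2), p.1.2)

variable [NeZero n] (Q N : ℝ≥0)

lemma isResampling_resampleX0 (c : FBFFDesign n) :
    IsResampling resampleX0 c.tX0 (timedBase n Q N) (gaussianReal 0 Q) :=
  .randomIndex (fun t => (isResampling_update (fun _ => gaussianReal 0 Q) t).fst _) _

lemma isResampling_resampleZ :
    IsResampling resampleZ timedZ (timedBase n Q N) (gaussianReal 0 N) :=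
  .randomIndex (fun t => ((isResampling_update (fun _ => gaussianReal 0 N) t).fst _).snd _) _

lemma isResampling_resampleW :
    IsResampling resampleW timedW (timedBase n Q N) (gaussianReal 0 1) :=
  .randomIndex
    (fun t => (((isResampling_update (fun _ => gaussianReal 0 1) t).snd _).snd _).snd _) _

end RandomTime

namespace FBFFDesign

variable {n : ℕ} (c : FBFFDesign n)

lemma U1_apply (ω : Sample n) (t : Fin n) :
    c.U1 ω t = c.enc t (srcX0 ω) (fun s => if s < t then c.Y1 ω s else 0) (seedV ω t) := by
  rw [U1, fbCtrl, dif_pos t.2]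
  rfl

lemma U1_congr {ω ω' : Sample n} (t : Fin n) (hx : ∀ s ≤ t, srcX0 ω s = srcX0 ω' s)
    (hz : ∀ s < t, noiseZ ω s = noiseZ ω' s) (hv : ∀ s ≤ t, seedV ω s = seedV ω' s) :
    c.U1 ω t = c.U1 ω' t := by
  induction t using WellFoundedLT.induction with
  | ind t ih =>
    rw [U1_apply, U1_apply, hv t le_rfl]
    refine c.enc_causal t _ _ _ _ _ hx fun s hs => ?_
    have hU : c.U1 ω s = c.U1 ω' s := ih s hs (fun i hi => hx i (hi.trans hs.le))
      (fun i hi => hz i (hi.trans hs)) (fun i hi => hv i (hi.trans hs.le))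
    simp only [hs, if_true, Y1, X1, hx s hs.le, hz s hs, hU]

lemma tT_congr {ω ω' : Sample n} (t : Fin n) (hx : ∀ s < t, srcX0 ω s = srcX0 ω' s)
    (hz : ∀ s < t, noiseZ ω s = noiseZ ω' s) (hv : ∀ s < t, seedV ω s = seedV ω' s) :
    c.tT (ω, t) = c.tT (ω', t) := by
  have hY (s : Fin n) (hs : s < t) : c.Y1 ω s = c.Y1 ω' s := by
    have hU := c.U1_congr s (fun i hi => hx i (hi.trans_lt hs)) (fun i hi => hz i (hi.trans hs))
      (fun i hi => hv i (hi.trans_lt hs))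
    simp only [Y1, X1, hx s hs, hz s hs, hU]
  refine Prod.ext (Prod.ext ?_ ?_) rfl <;> funext s
  exacts [ite_congr rfl (hx s) fun _ => rfl, ite_congr rfl (hY s) fun _ => rfl]

lemma tT_resampleX0 (ω : TimedSample n) (a : ℝ) : c.tT (resampleX0 (ω, a)) = c.tT ω :=
  c.tT_congr ω.2 (fun _ hs => Function.update_of_ne hs.ne _ _) (fun _ _ => rfl) fun _ _ => rfl

lemma tT_resampleZ (ω : TimedSample n) (a : ℝ) : c.tT (resampleZ (ω, a)) = c.tT ω :=
  c.tT_congr ω.2 (fun _ _ => rfl) (fun _ hs => Function.update_of_ne hs.ne _ _) fun _ _ => rfl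

lemma tU1_resampleZ (ω : TimedSample n) (a : ℝ) : c.tU1 (resampleZ (ω, a)) = c.tU1 ω :=
  c.U1_congr ω.2 (fun _ _ => rfl) (fun _ hs => Function.update_of_ne hs.ne _ _) fun _ _ => rfl

lemma measurable_U1 (t : Fin n) : Measurable fun ω => c.U1 ω t := by
  induction t using WellFoundedLT.induction with
  | ind t ih =>
    have hprefix : Measurable fun ω => fun s => if s < t then c.Y1 ω s else 0 := by
      refine measurable_pi_lambda _ fun s => ?_
      split_ifs with hs
      · have := ih s hs
        unfold Y1 X1
        fun_prop
      · exact measurable_const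
    simp only [U1_apply]
    exact (c.enc_meas t).comp ((measurable_srcX0.prodMk hprefix).prodMk (by fun_prop))

@[fun_prop]
lemma measurable_tX0 : Measurable c.tX0 :=
  measurable_from_prod_countable_left fun t => (measurable_pi_apply t).comp measurable_srcX0

@[fun_prop]
lemma measurable_tU1 : Measurable c.tU1 :=
  measurable_from_prod_countable_left c.measurable_U1

@[fun_prop]
lemma measurable_tX1 : Measurable c.tX1 :=
  c.measurable_tX0.add c.measurable_tU1

@[fun_prop]
lemma measurable_tY1 : Measurable c.tY1 :=
  c.measurable_tX1.add measurable_timedZ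

@[fun_prop]
lemma measurable_tT : Measurable c.tT := by
  refine measurable_from_prod_countable_left fun t => ?_
  have hY (s : Fin n) : Measurable fun ω => c.Y1 ω s := by
    have := c.measurable_U1 s
    unfold Y1 X1
    fun_prop
  refine .prodMk (.prodMk ?_ ?_) measurable_const <;>
    refine measurable_pi_lambda _ fun s => ?_ <;> dsimp only <;> split_ifs <;> fun_prop

/-- The decoder at the random time as a function of `((T, Y₁), W)`: writing `Y₁` into the
prefix stored in `T` gives all it observes, and `W` is its seed. -/
def timedDec (p : (((Path n × Path n) × Fin n) × ℝ) × ℝ) : ℝ :=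
  c.dec p.1.1.2 (Function.update p.1.1.1.2 p.1.1.2 p.1.2) p.1.1.1.1 p.2

lemma measurable_timedDec : Measurable c.timedDec := by
  have h : Measurable fun q : (((Path n × Path n) × ℝ) × ℝ) × Fin n =>
      c.dec q.2 (Function.update q.1.1.1.2 q.2 q.1.1.2) q.1.1.1.1 q.1.2 :=
    measurable_from_prod_countable_left fun t =>
      (c.dec_meas t).comp (f := fun q : ((Path n × Path n) × ℝ) × ℝ =>
        ((Function.update q.1.1.2 t q.1.2, q.1.1.1), q.2)) (by fun_prop)
  exact h.comp (f := fun p : (((Path n × Path n) × Fin n) × ℝ) × ℝ =>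
    (((p.1.1.1, p.1.2), p.2), p.1.1.2)) (by fun_prop)

lemma tU2_eq_timedDec (ω : TimedSample n) :
    c.tU2 ω = c.timedDec ((c.tT ω, c.tY1 ω), timedW ω) := by
  refine c.dec_causal ω.2 _ _ _ _ _ (fun s hs => ?_) fun s hs => (if_pos hs).symm
  rcases hs.eq_or_lt with rfl | hs
  · exact (Function.update_self ω.2 (c.tY1 ω) (c.tT ω).1.2).symm
  · exact ((Function.update_of_ne hs.ne (c.tY1 ω) (c.tT ω).1.2).trans (if_pos hs)).symm

variable [NeZero n] (Q N : ℝ≥0)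

lemma indepFun_tX0_tT : IndepFun c.tX0 c.tT (timedBase n Q N) :=
  ((isResampling_resampleX0 Q N c).indepFun c.measurable_tT c.tT_resampleX0).symm

lemma indepFun_timedZ :
    IndepFun (fun ω => ((c.tX0 ω, c.tT ω), c.tU1 ω)) timedZ (timedBase n Q N) :=
  (isResampling_resampleZ Q N).indepFun (by fun_prop) fun ω a =>
    Prod.ext (Prod.ext rfl (c.tT_resampleZ ω a)) (c.tU1_resampleZ ω a)

lemma indepFun_timedW :
    IndepFun (fun ω => (((c.tX0 ω, c.tT ω), c.tU1 ω), timedZ ω)) timedW (timedBase n Q N) :=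
  (isResampling_resampleW Q N).indepFun (by fun_prop) fun _ _ => rfl

lemma hasCondDistrib_tX1_tY1 :
    HasCondDistrib (fun ω => (c.tX1 ω, c.tY1 ω)) (fun ω => (c.tX0 ω, c.tU1 ω, c.tT ω))
      ((witChannel N).comap (fun p => (p.1, p.2.1)) (by fun_prop)) (timedBase n Q N) := by
  rw [witChannel_eq_noiseKernel]
  exact hasCondDistrib_comap_noiseKernel (by fun_prop) (isResampling_resampleZ Q N).hasLaw
    ((c.indepFun_timedZ Q N).comp
      (φ := fun q : (ℝ × ((Path n × Path n) × Fin n)) × ℝ => (q.1.1, q.2, q.1.2)) (by fun_prop)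
      measurable_id)
    (by fun_prop) fun _ => rfl

/-- The conditional law `P_{U₂|T,Y₁}` of the estimate at the random time. -/
def timedDecKernel : Kernel (((Path n × Path n) × Fin n) × ℝ) ℝ :=
  noiseKernel (gaussianReal 0 1) c.timedDec

instance : IsMarkovKernel c.timedDecKernel :=
  isMarkovKernel_noiseKernel _ c.measurable_timedDec

lemma hasCondDistrib_tU2_given_noise :
    HasCondDistrib c.tU2 (fun ω => (((c.tX0 ω, c.tT ω), c.tU1 ω), timedZ ω))
      (c.timedDecKernel.comap (fun q => (q.1.1.2, q.1.1.1 + q.1.2 + q.2)) (by fun_prop))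
      (timedBase n Q N) :=
  hasCondDistrib_comap_noiseKernel (by fun_prop) (isResampling_resampleW Q N).hasLaw
    (c.indepFun_timedW Q N) c.measurable_timedDec c.tU2_eq_timedDec

lemma hasCondDistrib_tU2_given_states :
    HasCondDistrib c.tU2 (fun ω => (c.tT ω, c.tY1 ω, c.tX0 ω, c.tU1 ω, c.tX1 ω))
      (c.timedDecKernel.comap (fun p => (p.1, p.2.1)) (by fun_prop)) (timedBase n Q N) :=
  HasCondDistrib.comp_right (Z := fun ω => (((c.tX0 ω, c.tT ω), c.tU1 ω), timedZ ω))
    (f := fun q => (q.1.1.2, q.1.1.1 + q.1.2 + q.2, q.1.1.1, q.1.2, q.1.1.1 + q.1.2))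
    (hf := by fun_prop) (c.hasCondDistrib_tU2_given_noise Q N)

end FBFFDesign

/-- **Converse structural lemma with channel feedback and source feed-forward** (Appendix B):
for any control design `c ∈ C_{ed,f,f}(n)`, with `Q` an independent uniform time, the
single-letter variables `X₀, U₁, X₁, Y₁, U₂` at time `Q` together with the auxiliary variable
`T = ((X₀^{Q-1}, Y₁^{Q-1}), Q)` satisfy:
(i) `X₀` is independent of `T`;
(ii) the conditional law of `(X₁, Y₁)` given `(X₀, U₁, T)` is the Witsenhausen channel and
depends only on `(X₀, U₁)`;
(iii) `U₂` is conditionally independent of `(X₀, U₁, X₁)` given `(T, Y₁)`;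
and consequently the joint law of `(X₀, T, U₁, X₁, Y₁, U₂)` decomposes according to
`P_{X₀} P_T P_{U₁|X₀,T} P_{X₁,Y₁|X₀,U₁} P_{U₂|T,Y₁}`. -/
theorem converse_structure_feedback_feedforward (Q N : ℝ≥0) (hQ : 0 < Q) (hN : 0 < N)
    (n : ℕ) [NeZero n] (c : FBFFDesign n) :
    -- (i)
    IndepFun c.tX0 c.tT (timedBase n Q N) ∧
    -- (ii)
    (∀ᵐ p ∂((timedBase n Q N).map (fun ω => (c.tX0 ω, c.tU1 ω, c.tT ω))),
      condDistrib (fun ω => (c.tX1 ω, c.tY1 ω)) (fun ω => (c.tX0 ω, c.tU1 ω, c.tT ω))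
          (timedBase n Q N) p
        = (witChannel N).comap
            (fun p : ℝ × ℝ × ((Path n × Path n) × Fin n) => (p.1, p.2.1))
            (by fun_prop) p) ∧
    -- (iii)
    (∀ᵐ p ∂((timedBase n Q N).map
        (fun ω => (c.tT ω, c.tY1 ω, c.tX0 ω, c.tU1 ω, c.tX1 ω))),
      condDistrib c.tU2 (fun ω => (c.tT ω, c.tY1 ω, c.tX0 ω, c.tU1 ω, c.tX1 ω))
          (timedBase n Q N) p
        = condDistrib c.tU2 (fun ω => (c.tT ω, c.tY1 ω)) (timedBase n Q N) (p.1, p.2.1)) ∧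
    -- consequence: the single-letter joint distribution decomposes
    (∃ d : SLDecomp Q N ((Path n × Path n) × Fin n),
      (timedBase n Q N).map
          (fun ω => (c.tX0 ω, c.tT ω, c.tU1 ω, c.tX1 ω, c.tY1 ω, c.tU2 ω))
        = d.joint) := by
  refine ⟨c.indepFun_tX0_tT Q N,
    condDistrib_ae_eq_of_hasCondDistrib (c.hasCondDistrib_tX1_tY1 Q N),
    condDistrib_ae_eq_comp_of_hasCondDistrib_comap (c.hasCondDistrib_tU2_given_states Q N), ?_⟩
  exact SLDecomp.exists_map_eq_joint (isResampling_resampleX0 Q N c).hasLaw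
    c.measurable_tT.aemeasurable (c.indepFun_tX0_tT Q N) c.measurable_tU1.aemeasurable
    (isResampling_resampleZ Q N).hasLaw (c.indepFun_timedZ Q N) c.timedDecKernel
    (c.hasCondDistrib_tU2_given_noise Q N)

end

end Witsenhausen
end
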